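/- Let P be a finite set of points in the plane in general position and let (a, b, c) be a triangle of the L∞-Delaunay triangulation of P, i.e., a, b, c ∈ P all lie on the boundary of some axis-aligned square with empty interior. Then there is a path from a to b in the θ₄-graph of P of length at most (1+√2)·(√2+36)·‖a−b‖₂. -/

import Mathlib

open scoped BigOperators

/-- Euclidean distance between two points of the plane. -/
noncomputable def dist2 (p q : ℝ × ℝ) : ℝ := Real.sqrt ((p.1 - q.1) ^ 2 + (p.2 - q.2) ^ 2)

/-- `L₁` distance between two points of the plane. -/
def dist1 (p q : ℝ × ℝ) : ℝ := |p.1 - q.1| + |p.2 - q.2|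

/-- `L∞` distance between two points of the plane (half the side of `S_t(s)`). -/
def distInf (p q : ℝ × ℝ) : ℝ := max |p.1 - q.1| |p.2 - q.2|

/-- `cone i p q` : the point `q` lies in the open cone (quadrant) `C_i(p)`. -/
def cone (i : ℕ) (p q : ℝ × ℝ) : Prop :=
  if i = 0 then p.1 < q.1 ∧ q.2 < p.2
  else if i = 1 then p.1 < q.1 ∧ p.2 < q.2
  else if i = 2 then q.1 < p.1 ∧ p.2 < q.2
  else q.1 < p.1 ∧ q.2 < p.2

/-- General position: no two points of `P` on a common vertical line, horizontal line,
or line of slope `+1` or `-1`. -/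
def GenPos (P : Finset (ℝ × ℝ)) : Prop :=
  ∀ p ∈ P, ∀ q ∈ P, p ≠ q →
    p.1 ≠ q.1 ∧ p.2 ≠ q.2 ∧ p.2 - p.1 ≠ q.2 - q.1 ∧ p.2 + p.1 ≠ q.2 + q.1

/-- `IsNbr P i p q` : `q = n_i(p)`, i.e. `q` is a point of `P` in `C_i(p)` minimizing
the `L₁`-distance to `p`. -/
def IsNbr (P : Finset (ℝ × ℝ)) (i : ℕ) (p q : ℝ × ℝ) : Prop :=
  q ∈ P ∧ cone i p q ∧ ∀ r ∈ P, cone i p r → dist1 p q ≤ dist1 p r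

/-- Adjacency in the θ₄-graph of `P`. -/
def Theta4Adj (P : Finset (ℝ × ℝ)) (p q : ℝ × ℝ) : Prop :=
  p ∈ P ∧ q ∈ P ∧ ∃ i < 4, (IsNbr P i p q ∨ IsNbr P i q p)

/-- A walk with `k` edges in the θ₄-graph of `P`, given by its vertices `v 0, …, v k`. -/
def IsTheta4Path (P : Finset (ℝ × ℝ)) (k : ℕ) (v : ℕ → ℝ × ℝ) : Prop :=
  v 0 ∈ P ∧ ∀ j < k, Theta4Adj P (v j) (v (j + 1))

/-- The Euclidean length of a path with `k` edges. -/
noncomputable def pathLength (k : ℕ) (v : ℕ → ℝ × ℝ) : ℝ :=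
  ∑ j ∈ Finset.range k, dist2 (v j) (v (j + 1))

/-- `p` is `t`-protected: no point of `P` lying in `C₁(p)` is on or below the line `ℓ⁻_t`
of slope `-1` through `t`. -/
def TProtected (P : Finset (ℝ × ℝ)) (t p : ℝ × ℝ) : Prop :=
  ∀ q ∈ P, cone 1 p q → t.1 + t.2 < q.1 + q.2

/-- Membership in the (closed) axis-aligned square with bottom-left corner `(x0, y0)`
and side length `L`. -/
def inSquare (x0 y0 L : ℝ) (q : ℝ × ℝ) : Prop :=
  x0 ≤ q.1 ∧ q.1 ≤ x0 + L ∧ y0 ≤ q.2 ∧ q.2 ≤ y0 + L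

/-- `q` lies on the left side of the square. -/
def onLeft (x0 y0 L : ℝ) (q : ℝ × ℝ) : Prop := q.1 = x0 ∧ y0 ≤ q.2 ∧ q.2 ≤ y0 + L

/-- `q` lies on the right side of the square. -/
def onRight (x0 y0 L : ℝ) (q : ℝ × ℝ) : Prop := q.1 = x0 + L ∧ y0 ≤ q.2 ∧ q.2 ≤ y0 + L

/-- `q` lies on the bottom side of the square. -/
def onBottom (x0 y0 L : ℝ) (q : ℝ × ℝ) : Prop := q.2 = y0 ∧ x0 ≤ q.1 ∧ q.1 ≤ x0 + L

/-- `q` lies on the top side of the square. -/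
def onTop (x0 y0 L : ℝ) (q : ℝ × ℝ) : Prop := q.2 = y0 + L ∧ x0 ≤ q.1 ∧ q.1 ≤ x0 + L

/-- `a` and `b` lie on two sides of the square that share a corner. -/
def onConsecutiveSides (x0 y0 L : ℝ) (a b : ℝ × ℝ) : Prop :=
  (onBottom x0 y0 L a ∧ onLeft x0 y0 L b) ∨ (onBottom x0 y0 L a ∧ onRight x0 y0 L b) ∨
  (onTop x0 y0 L a ∧ onLeft x0 y0 L b) ∨ (onTop x0 y0 L a ∧ onRight x0 y0 L b) ∨
  (onLeft x0 y0 L a ∧ onBottom x0 y0 L b) ∨ (onRight x0 y0 L a ∧ onBottom x0 y0 L b) ∨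
  (onLeft x0 y0 L a ∧ onTop x0 y0 L b) ∨ (onRight x0 y0 L a ∧ onTop x0 y0 L b)

/-- `q` lies on the boundary of the square with bottom-left corner `(x0, y0)` and side `L`. -/
def onBoundary (x0 y0 L : ℝ) (q : ℝ × ℝ) : Prop :=
  inSquare x0 y0 L q ∧ (q.1 = x0 ∨ q.1 = x0 + L ∨ q.2 = y0 ∨ q.2 = y0 + L)

/-! The proof works in the rotated coordinates `u = x + y`, `v = y - x` centred at the target. -/

/-- `L₁` norm in the rotated coordinates. -/
def nrm (z : ℝ × ℝ) : ℝ := |z.1| + |z.2|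

/-- Weakly the same sign. -/
def SameSgn (a b : ℝ) : Prop := (0 ≤ a ∧ 0 ≤ b) ∨ (a ≤ 0 ∧ b ≤ 0)

/-- Rotation by a right angle. -/
def rot (z : ℝ × ℝ) : ℝ × ℝ := (-z.2, z.1)

/-- Abstract properties of the point set `Q` (target at the origin) and of the relation
`R p q l`: there is a path from `p` to `q` of length at most `l`. -/
structure Sys (Q : ℝ × ℝ → Prop) (R : ℝ × ℝ → ℝ × ℝ → ℝ → Prop) : Prop where
  fin : {z | Q z}.Finite
  zero : Q (0, 0)
  g1 : ∀ z, Q z → z ≠ (0, 0) → z.1 ≠ 0 ∧ z.2 ≠ 0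
  gp : ∀ z w, Q z → Q w → z ≠ w → |z.1 - w.1| ≠ |z.2 - w.2|
  refl : ∀ p, Q p → R p p 0
  mono : ∀ p q a b, R p q a → a ≤ b → R p q b
  trans : ∀ p q r a b, R p q a → R q r b → R p r (a + b)
  horiz : ∀ s : ℝ, (s = 1 ∨ s = -1) → ∀ p z, Q p → Q z → |z.2 - p.2| < s * (z.1 - p.1) →
    ∃ q, Q q ∧ |q.2 - p.2| < s * (q.1 - p.1) ∧
      (∀ w, Q w → |w.2 - p.2| < s * (w.1 - p.1) → s * (q.1 - p.1) ≤ s * (w.1 - p.1)) ∧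
      R p q (s * (q.1 - p.1))
  vert : ∀ s : ℝ, (s = 1 ∨ s = -1) → ∀ p z, Q p → Q z → |z.1 - p.1| < s * (z.2 - p.2) →
    ∃ q, Q q ∧ |q.1 - p.1| < s * (q.2 - p.2) ∧
      (∀ w, Q w → |w.1 - p.1| < s * (w.2 - p.2) → s * (q.2 - p.2) ≤ s * (w.2 - p.2)) ∧
      R p q (s * (q.2 - p.2))

section core

variable {Q : ℝ × ℝ → Prop} {R : ℝ × ℝ → ℝ × ℝ → ℝ → Prop}

theorem Sys.ind (H : Sys Q R) (f : ℝ × ℝ → ℝ) (C : ℝ × ℝ → Prop)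
    (h : ∀ p, Q p → (∀ q, Q q → f q < f p → C q) → C p) : ∀ p, Q p → C p := by
  have key : ∀ k : ℕ, ∀ p, Q p → (H.fin.toFinset.filter (fun z => f z < f p)).card < k → C p := by
    intro k
    induction k with
    | zero => intro p _ hk; omega
    | succ k ih =>
      intro p hp hk
      refine h p hp (fun q hq hlt => ih q hq ?_)
      have : (H.fin.toFinset.filter (fun z => f z < f q)).card
          < (H.fin.toFinset.filter (fun z => f z < f p)).card := by
        apply Finset.card_lt_card
        rw [Finset.ssubset_iff_of_subset]
        · refine ⟨q, by simp [hq, hlt], by simp⟩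
        · intro z hz
          simp at hz ⊢
          exact ⟨hz.1, hz.2.trans hlt⟩
      omega
  intro p hp
  exact key _ p hp (Nat.lt_succ_self _)

theorem Sys.rotate (H : Sys Q R) :
    Sys (fun z => Q (rot z)) (fun p q l => R (rot p) (rot q) l) where
  fin := by
    have : Function.Injective rot := by
      intro a b h
      simp only [rot, Prod.mk.injEq, neg_inj] at h
      exact Prod.ext h.2 h.1
    exact H.fin.preimage this.injOn
  zero := by simpa [rot] using H.zero
  g1 := by
    intro z hz h0
    have := H.g1 _ hz (by
      intro h; apply h0
      simp only [rot, Prod.mk.injEq, neg_eq_zero] at h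
      exact Prod.ext h.2 h.1)
    simp only [rot, ne_eq, neg_eq_zero] at this
    exact ⟨this.2, this.1⟩
  gp := by
    intro z w hz hw h0 h
    refine H.gp _ _ hz hw ?_ ?_
    · intro h; apply h0
      simp only [rot, Prod.mk.injEq, neg_inj] at h
      exact Prod.ext h.2 h.1
    · simp only [rot]
      rw [h, ← abs_neg]; ring_nf
  refl := fun p hp => H.refl _ hp
  mono := fun p q a b h => H.mono _ _ a b h
  trans := fun p q r a b h h' => H.trans _ _ _ a b h h'
  horiz := by
    intro s hs p z hp hz h
    have e : ∀ w : ℝ × ℝ, |-w.2 - -p.2| = |w.2 - p.2| := by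
      intro w; rw [← abs_neg]; ring_nf
    obtain ⟨q, hq, h1, h2, h3⟩ := H.vert s hs _ _ hp hz (by
      simp only [rot]; rw [e]; exact h)
    have hq' : rot (q.2, -q.1) = q := by simp [rot]
    refine ⟨(q.2, -q.1), by rw [hq']; exact hq, ?_, ?_, ?_⟩
    · simp only [rot] at h1 ⊢
      rw [← abs_neg]; convert h1 using 2; ring
    · intro w hw h
      have := h2 _ hw (by simp only [rot]; rw [e]; exact h)
      exact this
    · rw [hq']; exact h3
  vert := by
    intro s hs p z hp hz h
    have hs' : -s = 1 ∨ -s = -1 := by rcases hs with rfl | rfl <;> simp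
    have e : ∀ w : ℝ × ℝ, -s * (-w.2 - -p.2) = s * (w.2 - p.2) := by
      intro w; ring
    obtain ⟨q, hq, h1, h2, h3⟩ := H.horiz (-s) hs' _ _ hp hz (by
      simp only [rot]; rw [e]; exact h)
    have hq' : rot (q.2, -q.1) = q := by simp [rot]
    have e2 : -s * (q.1 - (rot p).1) = s * (-q.1 - p.2) := by
      simp only [rot]; ring
    refine ⟨(q.2, -q.1), by rw [hq']; exact hq, ?_, ?_, ?_⟩
    · rw [e2] at h1
      exact h1
    · intro w hw h
      have := h2 _ hw (by simp only [rot]; rw [e]; exact h)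
      rw [e2] at this
      simp only [rot] at this
      rw [e] at this
      exact this
    · rw [hq', ← e2]; exact h3

/-- `z` is reachable from `p` by a sweep towards the vertical axis. -/
def Sw (p z : ℝ × ℝ) : Prop := SameSgn p.1 z.1 ∧ |z.2 - p.2| < |p.1| - |z.1|

theorem sw_iff (p z : ℝ × ℝ) : Sw p z ↔
    (p.1 < 0 ∧ z.1 ≤ 0 ∧ |z.2 - p.2| < 1 * (z.1 - p.1)) ∨
    (0 < p.1 ∧ 0 ≤ z.1 ∧ |z.2 - p.2| < (-1) * (z.1 - p.1)) := by
  have := abs_nonneg (z.2 - p.2)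
  unfold Sw SameSgn
  constructor
  · rintro ⟨⟨h1, h2⟩ | ⟨h1, h2⟩, h3⟩
    · rw [abs_of_nonneg h1, abs_of_nonneg h2] at h3
      right; refine ⟨?_, h2, ?_⟩ <;> linarith
    · rw [abs_of_nonpos h1, abs_of_nonpos h2] at h3
      left; refine ⟨?_, h2, ?_⟩ <;> linarith
  · rintro (⟨h1, h2, h3⟩ | ⟨h1, h2, h3⟩)
    · rw [abs_of_nonpos h1.le, abs_of_nonpos h2]
      exact ⟨Or.inr ⟨h1.le, h2⟩, by linarith⟩
    · rw [abs_of_nonneg h1.le, abs_of_nonneg h2]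
      exact ⟨Or.inl ⟨h1.le, h2⟩, by linarith⟩

theorem Sys.sweep_step (H : Sys Q R) {p z : ℝ × ℝ} (hp : Q p) (hz : Q z) (h : Sw p z) :
    ∃ q, Q q ∧ Sw p q ∧ R p q (|p.1| - |q.1|) := by
  rw [sw_iff] at h
  rcases h with ⟨h1, h2, h3⟩ | ⟨h1, h2, h3⟩
  · obtain ⟨q, hq, h4, h5, h6⟩ := H.horiz 1 (Or.inl rfl) p z hp hz h3
    have h7 : q.1 ≤ 0 := by linarith [h5 z hz h3]
    refine ⟨q, hq, (sw_iff _ _).2 (Or.inl ⟨h1, h7, h4⟩), ?_⟩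
    rw [abs_of_nonpos h1.le, abs_of_nonpos h7]
    convert h6 using 1; ring
  · obtain ⟨q, hq, h4, h5, h6⟩ := H.horiz (-1) (Or.inr rfl) p z hp hz h3
    have h7 : 0 ≤ q.1 := by linarith [h5 z hz h3]
    refine ⟨q, hq, (sw_iff _ _).2 (Or.inr ⟨h1, h7, h4⟩), ?_⟩
    rw [abs_of_nonneg h1.le, abs_of_nonneg h7]
    convert h6 using 1; ring

/-- No sweep is possible from `p`. -/
def Prot (Q : ℝ × ℝ → Prop) (p : ℝ × ℝ) : Prop := ∀ z, Q z → ¬ Sw p z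

theorem Sys.sweep (H : Sys Q R) : ∀ p, Q p → 0 ≤ p.2 →
    ∃ q, Q q ∧ R p q (|p.1| - |q.1|) ∧ SameSgn p.1 q.1 ∧ |q.2 - p.2| ≤ |p.1| - |q.1| ∧
      ((0 ≤ q.2 ∧ Prot Q q) ∨ q.2 < 0) := by
  refine H.ind (fun z => |z.1|) _ ?_
  intro p hp ih hv
  by_cases hpr : Prot Q p
  · refine ⟨p, hp, by simpa using H.refl p hp, ?_, by simp, Or.inl ⟨hv, hpr⟩⟩
    rcases le_total 0 p.1 with h | h
    · exact Or.inl ⟨h, h⟩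
    · exact Or.inr ⟨h, h⟩
  · unfold Prot at hpr
    push Not at hpr
    obtain ⟨z, hz, hsw⟩ := hpr
    obtain ⟨q, hq, ⟨h1, h2⟩, h3⟩ := H.sweep_step hp hz hsw
    have hlt : |q.1| < |p.1| := by linarith [abs_nonneg (q.2 - p.2)]
    rcases lt_or_ge q.2 0 with hneg | hpos
    · exact ⟨q, hq, h3, h1, h2.le, Or.inr hneg⟩
    · obtain ⟨r, hr, h4, h5, h6, h7⟩ := ih q hq hlt hpos
      refine ⟨r, hr, ?_, ?_, ?_, h7⟩
      · refine H.mono _ _ _ _ (H.trans _ _ _ _ _ h3 h4) (by linarith)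
      · have hnz : q.1 = 0 → r.1 = 0 := by
          intro h0
          rw [h0, abs_zero] at h6
          have := abs_nonneg (r.2 - q.2)
          have := abs_nonneg r.1
          exact abs_eq_zero.1 (by linarith)
        unfold SameSgn at *
        rcases h1 with ⟨a, b⟩ | ⟨a, b⟩ <;> rcases h5 with ⟨c, d⟩ | ⟨c, d⟩
        · exact Or.inl ⟨a, d⟩
        · exact Or.inl ⟨a, (hnz (le_antisymm c b)).ge⟩
        · exact Or.inr ⟨a, (hnz (le_antisymm b c)).le⟩
        · exact Or.inr ⟨a, d⟩
      · have := abs_sub_le r.2 q.2 p.2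
        linarith

theorem abs_sub_same {a b : ℝ} (h : SameSgn a b) : |a - b| = abs (|a| - |b|) := by
  rcases h with ⟨h1, h2⟩ | ⟨h1, h2⟩
  · rw [abs_of_nonneg h1, abs_of_nonneg h2]
  · rw [abs_of_nonpos h1, abs_of_nonpos h2, ← abs_neg]; ring_nf

/-- A protected point sees all points of smaller norm on its side in its downward cone. -/
theorem Sys.down_of_prot (H : Sys Q R) {p z : ℝ × ℝ} (hp : Q p) (hz : Q z) (hpr : Prot Q p)
    (hpv : 0 ≤ p.2) (hzv : 0 ≤ z.2) (hs : SameSgn p.1 z.1) (hn : nrm z < nrm p) :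
    |z.1 - p.1| < p.2 - z.2 := by
  have hne : z ≠ p := by rintro rfl; exact lt_irrefl _ hn
  have hg := H.gp z p hz hp hne
  have hnot := hpr z hz
  unfold Sw at hnot
  have e := abs_sub_same hs
  rw [abs_sub_comm] at e
  unfold nrm at hn
  rw [abs_of_nonneg hpv, abs_of_nonneg hzv] at hn
  have h3 : ¬ |z.2 - p.2| < |p.1| - |z.1| := fun h => hnot ⟨hs, h⟩
  rw [e] at hg ⊢
  by_contra hcon
  rcases abs_cases (|p.1| - |z.1|) with ⟨k, _⟩ | ⟨k, _⟩ <;>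
    rcases abs_cases (z.2 - p.2) with ⟨m, _⟩ | ⟨m, _⟩ <;> rw [k, m] at hg <;>
    rw [k] at hcon <;> rw [m] at h3 <;> first | linarith | (apply hg; linarith)

/-- Octant of a point. -/
noncomputable def oct (z : ℝ × ℝ) : Bool × Bool × Bool :=
  (decide (0 < z.1), decide (0 < z.2), decide (|z.1| < |z.2|))

/-- Result of one phase started at `p0`. -/
def Out (Q : ℝ × ℝ → Prop) (M : ℝ) (p0 r : ℝ × ℝ) : Prop :=
  nrm r ≤ M / 2 ∨ (nrm r ≤ nrm p0 ∧ ∃ p, Q p ∧ M / 2 < nrm p ∧ nrm p ≤ nrm p0 ∧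
    ∀ z, Q z → M / 2 < nrm z → nrm z ≤ nrm r → oct z ≠ oct p)

theorem Sys.prot_phase (H : Sys Q R) (M : ℝ) (hM : 0 ≤ M) : ∀ p, Q p → Prot Q p → 0 ≤ p.2 →
    M / 2 < nrm p → nrm p ≤ M → ∃ r, Q r ∧ R p r (p.2 + nrm p) ∧ Out Q M p r := by
  refine H.ind nrm _ ?_
  intro p hp ih hpr hpv hpl hpM
  have hp0 : p ≠ (0, 0) := by
    rintro rfl
    simp [nrm] at hpl
    linarith
  have hcone : |p.1| < p.2 := by
    have h1 := hpr _ H.zero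
    have h2 := H.gp p (0, 0) hp H.zero hp0
    unfold Sw at h1
    simp only [sub_zero, zero_sub, abs_neg, abs_zero] at h1 h2
    have h3 : ¬ |p.2| < |p.1| := by
      intro h; apply h1; refine ⟨?_, h⟩
      unfold SameSgn
      rcases le_total 0 p.1 with h | h <;> simp [h]
    rw [abs_of_nonneg hpv] at h2 h3
    exact lt_of_le_of_ne (not_lt.1 h3) h2
  obtain ⟨q, hq, hq1, hq2, hq3⟩ := H.vert (-1) (Or.inr rfl) p (0, 0) hp H.zero (by
    simp; exact hcone)
  have hqv : 0 ≤ q.2 := by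
    have := hq2 _ H.zero (by simp; exact hcone)
    simp at this; linarith
  have hnear : ∀ w, Q w → |w.1 - p.1| < p.2 - w.2 → w.2 ≤ q.2 := by
    intro w hw h
    have := hq2 w hw (by linarith)
    linarith
  have hnp : nrm p = |p.1| + p.2 := by rw [nrm, abs_of_nonneg hpv]
  have hnq : nrm q = |q.1| + q.2 := by rw [nrm, abs_of_nonneg hqv]
  have hqp : nrm q < nrm p := by
    have := abs_sub_abs_le_abs_sub q.1 p.1
    linarith
  have habs := abs_nonneg q.1
  have habs' := abs_nonneg p.1
  rcases le_or_gt (nrm q) (M / 2) with hsm | hbig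
  · exact ⟨q, hq, H.mono _ _ _ _ hq3 (by linarith), Or.inl hsm⟩
  obtain ⟨r, hr, hR, hss, hdv, hcase⟩ := H.sweep q hq hqv
  have hR' := H.trans _ _ _ _ _ hq3 hR
  have hr0 := abs_nonneg r.1
  have hdv2 := abs_le.1 hdv
  have hnr : nrm r ≤ nrm q := by
    have := abs_sub_abs_le_abs_sub r.2 q.2
    unfold nrm; linarith
  rcases le_or_gt (nrm r) (M / 2) with hsm | hbig'
  · exact ⟨r, hr, H.mono _ _ _ _ hR' (by linarith), Or.inl hsm⟩
  rcases hcase with ⟨hrv, hrp⟩ | hneg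
  · have hnr' : nrm r = |r.1| + r.2 := by rw [nrm, abs_of_nonneg hrv]
    have hle : r.2 ≤ q.2 := by
      by_cases hs : SameSgn p.1 r.1
      · exact hnear r hr (H.down_of_prot hp hr hpr hpv hrv hs (by linarith))
      · by_contra hcon
        have hno : ¬ |r.1 - p.1| < p.2 - r.2 := fun h => hcon (hnear r hr h)
        apply hno
        have a1 : |r.1 - p.1| ≤ |r.1| + |p.1| := abs_sub _ _
        have a2 : |q.1 - p.1| = |q.1| + |p.1| := by
          unfold SameSgn at hs hss
          rcases hss with ⟨b1, b2⟩ | ⟨b1, b2⟩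
          · have : p.1 ≤ 0 := by
              by_contra h; exact hs (Or.inl ⟨by linarith, b2⟩)
            rw [abs_of_nonneg b1, abs_of_nonpos this, abs_of_nonneg] <;> linarith
          · have : 0 ≤ p.1 := by
              by_contra h; exact hs (Or.inr ⟨by linarith, b2⟩)
            rw [abs_of_nonpos b1, abs_of_nonneg this, abs_of_nonpos] <;> linarith
        linarith
    obtain ⟨r', hr', hR2, hout⟩ := ih r hr (by linarith) hrp hrv hbig' (by linarith)
    refine ⟨r', hr', H.mono _ _ _ _ (H.trans _ _ _ _ _ hR' hR2) (by linarith), ?_⟩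
    rcases hout with h | ⟨h, w, hw, hw1, hw2, hw3⟩
    · exact Or.inl h
    · exact Or.inr ⟨by linarith, w, hw, hw1, by linarith, hw3⟩
  · have hnr' : nrm r = |r.1| - r.2 := by rw [nrm, abs_of_neg hneg]; ring
    refine ⟨r, hr, H.mono _ _ _ _ hR' (by linarith), Or.inr ⟨by linarith, p, hp, hpl, le_rfl, ?_⟩⟩
    intro z hz hz1 hz2 hoct
    have hppos : 0 < p.2 := by linarith
    simp only [oct, Prod.mk.injEq, decide_eq_decide] at hoct
    obtain ⟨o1, o2, o3⟩ := hoct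
    have z2 : 0 < z.2 := o2.2 hppos
    have z3 : |z.1| < |z.2| := o3.2 (by rw [abs_of_pos hppos]; exact hcone)
    rw [abs_of_pos z2] at z3
    have hs : SameSgn p.1 z.1 := by
      unfold SameSgn
      by_cases h : 0 < p.1
      · exact Or.inl ⟨h.le, (o1.2 h).le⟩
      · exact Or.inr ⟨not_lt.1 h, not_lt.1 (fun h' => h (o1.1 h'))⟩
    have := hnear z hz (H.down_of_prot hp hz hpr hpv z2.le hs (by linarith))
    have hnz : nrm z = |z.1| + z.2 := by rw [nrm, abs_of_pos z2]
    linarith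

/-- A phase started in the upward cone of the target. -/
theorem Sys.phase_top (H : Sys Q R) (M : ℝ) (hM : 0 ≤ M) (p : ℝ × ℝ) (hp : Q p)
    (hc : |p.1| < p.2) (hpM : nrm p ≤ M) :
    ∃ r, Q r ∧ R p r (5 / 2 * M) ∧ Out Q M p r := by
  have h0 := abs_nonneg p.1
  have hpv : 0 ≤ p.2 := by linarith
  have hnp : nrm p = |p.1| + p.2 := by rw [nrm, abs_of_nonneg hpv]
  obtain ⟨q, hq, hR, hss, hdv, hcase⟩ := H.sweep p hp hpv
  have hq0 := abs_nonneg q.1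
  have hdv2 := abs_le.1 hdv
  have hqv : 0 ≤ q.2 := by linarith
  have hnq : nrm q = |q.1| + q.2 := by rw [nrm, abs_of_nonneg hqv]
  rcases le_or_gt (nrm q) (M / 2) with hsm | hbig
  · exact ⟨q, hq, H.mono _ _ _ _ hR (by linarith), Or.inl hsm⟩
  rcases hcase with ⟨_, hqp⟩ | h
  · obtain ⟨r, hr, hR2, hout⟩ := H.prot_phase M hM q hq hqp hqv hbig (by linarith)
    refine ⟨r, hr, H.mono _ _ _ _ (H.trans _ _ _ _ _ hR hR2) (by linarith), ?_⟩
    rcases hout with h | ⟨h, w, hw, hw1, hw2, hw3⟩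
    · exact Or.inl h
    · exact Or.inr ⟨by linarith, w, hw, hw1, by linarith, hw3⟩
  · linarith

theorem nrm_rot (z : ℝ × ℝ) : nrm (rot z) = nrm z := by
  simp [nrm, rot, add_comm]

theorem Sys.oct_rot (H : Sys Q R) {z w : ℝ × ℝ} (hz : Q z) (hw : Q w) (hz0 : z ≠ (0, 0))
    (hw0 : w ≠ (0, 0)) (h : oct (rot z) = oct (rot w)) : oct z = oct w := by
  have a := H.g1 z hz hz0
  have b := H.g1 w hw hw0
  have c := H.gp z (0, 0) hz H.zero hz0
  have d := H.gp w (0, 0) hw H.zero hw0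
  simp only [sub_zero] at c d
  have h1 : 0 < -z.2 ↔ 0 < -w.2 := decide_eq_decide.1 (congrArg (fun o => o.1) h)
  have h2 : 0 < z.1 ↔ 0 < w.1 := decide_eq_decide.1 (congrArg (fun o => o.2.1) h)
  have h3 : |-z.2| < |z.1| ↔ |-w.2| < |w.1| := decide_eq_decide.1 (congrArg (fun o => o.2.2) h)
  rw [abs_neg, abs_neg] at h3
  simp only [oct, Prod.mk.injEq, decide_eq_decide]
  refine ⟨h2, ?_, ?_⟩
  · rcases lt_or_gt_of_ne a.2 with p | p <;> rcases lt_or_gt_of_ne b.2 with q | q <;>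
      constructor <;> intro r <;> try linarith
    · have := h1.1 (by linarith); linarith
    · have := h1.2 (by linarith); linarith
  · rcases lt_or_gt_of_ne c with p | p <;> rcases lt_or_gt_of_ne d with q | q <;>
      constructor <;> intro r <;> try linarith
    · have := h3.2 (by linarith); linarith
    · have := h3.1 (by linarith); linarith

theorem nrm_eq_zero {z : ℝ × ℝ} (h : nrm z = 0) : z = (0, 0) := by
  unfold nrm at h
  have a := abs_nonneg z.1
  have b := abs_nonneg z.2
  exact Prod.ext (abs_eq_zero.1 (by linarith)) (abs_eq_zero.1 (by linarith))

theorem nrm_zero : nrm (0, 0) = 0 := by simp [nrm]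

/-- The statement of one phase. -/
def Phase (Q : ℝ × ℝ → Prop) (R : ℝ × ℝ → ℝ × ℝ → ℝ → Prop) (M : ℝ) (p : ℝ × ℝ) : Prop :=
  ∃ r, Q r ∧ R p r (5 / 2 * M) ∧ Out Q M p r

/-- Transport of a phase along the rotation. -/
theorem Sys.phase_rot (H : Sys Q R) (M : ℝ) (hM : 0 ≤ M) (p : ℝ × ℝ)
    (h : Phase (fun z => Q (rot z)) (fun a b l => R (rot a) (rot b) l) M p) :
    Phase Q R M (rot p) := by
  obtain ⟨r, hr, hR, hout⟩ := h
  refine ⟨rot r, hr, hR, ?_⟩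
  rcases hout with h | ⟨h, w, hw, hw1, hw2, hw3⟩
  · exact Or.inl (by rwa [nrm_rot])
  · refine Or.inr ⟨by rwa [nrm_rot, nrm_rot], rot w, hw, by rwa [nrm_rot],
      by rwa [nrm_rot, nrm_rot], ?_⟩
    intro z hz hz1 hz2 ho
    have hz' : rot (z.2, -z.1) = z := by simp [rot]
    have e : nrm (z.2, -z.1) = nrm z := by rw [← nrm_rot, hz']
    have hQz : (fun z => Q (rot z)) (z.2, -z.1) := by
      show Q (rot (z.2, -z.1))
      rw [hz']; exact hz
    refine hw3 (z.2, -z.1) hQz (by rwa [e]) (by rw [e]; rwa [nrm_rot] at hz2) ?_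
    have nz : ∀ y : ℝ × ℝ, M / 2 < nrm y → y ≠ (0, 0) := by
      rintro y hy rfl
      rw [nrm_zero] at hy; linarith
    apply H.rotate.oct_rot hQz hw (nz _ (by rwa [e])) (nz _ hw1)
    rw [hz']; exact ho

theorem Sys.phase_any (H : Sys Q R) (M : ℝ) (hM : 0 ≤ M) (p : ℝ × ℝ) (hp : Q p)
    (hp0 : p ≠ (0, 0)) (hpM : nrm p ≤ M) : Phase Q R M p := by
  have g := H.gp p (0, 0) hp H.zero hp0
  simp only [sub_zero] at g
  have e1 : ∀ z : ℝ × ℝ, rot (z.2, -z.1) = z := by intro z; simp [rot]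
  have n1 : ∀ z : ℝ × ℝ, nrm (z.2, -z.1) = nrm z := by intro z; rw [← nrm_rot, e1]
  rcases lt_or_gt_of_ne g with h | h
  · rcases le_total 0 p.2 with k | k
    · rw [abs_of_nonneg k] at h
      exact H.phase_top M hM p hp h hpM
    · rw [abs_of_nonpos k] at h
      have e : rot (rot (-p.1, -p.2)) = p := by simp [rot]
      have := H.phase_rot M hM (rot (-p.1, -p.2)) (H.rotate.phase_rot M hM (-p.1, -p.2)
        (H.rotate.rotate.phase_top M hM (-p.1, -p.2) (by
          show Q (rot (rot (-p.1, -p.2))); rw [e]; exact hp) (by simpa using h)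
          (by simpa [nrm] using hpM)))
      rwa [e] at this
  · rcases le_total 0 p.1 with k | k
    · rw [abs_of_nonneg k] at h
      have e : rot (rot (rot (-p.2, p.1))) = p := by simp [rot]
      have := H.phase_rot M hM _ (H.rotate.phase_rot M hM _
        (H.rotate.rotate.phase_rot M hM (-p.2, p.1)
        (H.rotate.rotate.rotate.phase_top M hM (-p.2, p.1) (by
          show Q (rot (rot (rot (-p.2, p.1)))); rw [e]; exact hp) (by simpa using h)
          (by simpa [nrm, add_comm] using hpM))))
      rwa [e] at this
    · rw [abs_of_nonpos k] at h
      have := H.phase_rot M hM (p.2, -p.1) (H.rotate.phase_top M hM (p.2, -p.1) (by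
          show Q (rot (p.2, -p.1)); rw [e1]; exact hp) (by simpa using h)
          (by rw [n1]; exact hpM))
      rwa [e1] at this

open Classical in
/-- Octants containing a point of norm in `(M / 2, n]`. -/
noncomputable def alive (Q : ℝ × ℝ → Prop) (M n : ℝ) : Finset (Bool × Bool × Bool) :=
  Finset.univ.filter (fun o => ∃ z, Q z ∧ M / 2 < nrm z ∧ nrm z ≤ n ∧ oct z = o)

theorem Sys.halve (H : Sys Q R) (M : ℝ) (hM : 0 ≤ M) : ∀ k : ℕ, ∀ p, Q p → nrm p ≤ M →
    (alive Q M (nrm p)).card ≤ k → ∃ r, Q r ∧ R p r (5 / 2 * M * k) ∧ nrm r ≤ M / 2 := by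
  intro k
  induction k with
  | zero =>
    intro p hp hpM hk
    refine ⟨p, hp, by simpa using H.refl p hp, ?_⟩
    by_contra h
    have : oct p ∈ alive Q M (nrm p) := by
      simp only [alive, Finset.mem_filter, Finset.mem_univ, true_and]
      exact ⟨p, hp, not_le.1 h, le_rfl, rfl⟩
    have := Finset.card_pos.2 ⟨_, this⟩
    omega
  | succ k ih =>
    intro p hp hpM hk
    by_cases hp0 : p = (0, 0)
    · refine ⟨p, hp, H.mono _ _ _ _ (H.refl p hp) (by positivity), ?_⟩
      rw [hp0, nrm_zero]; linarith
    obtain ⟨r, hr, hR, hout⟩ := H.phase_any M hM p hp hp0 hpM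
    rcases hout with h | ⟨h, w, hw, hw1, hw2, hw3⟩
    · refine ⟨r, hr, H.mono _ _ _ _ hR ?_, h⟩
      push_cast
      nlinarith [mul_nonneg hM (Nat.cast_nonneg (α := ℝ) k)]
    · have hlt : (alive Q M (nrm r)).card < (alive Q M (nrm p)).card := by
        apply Finset.card_lt_card
        rw [Finset.ssubset_iff_of_subset]
        · refine ⟨oct w, ?_, ?_⟩
          · simp only [alive, Finset.mem_filter, Finset.mem_univ, true_and]
            exact ⟨w, hw, hw1, hw2, rfl⟩
          · simp only [alive, Finset.mem_filter, Finset.mem_univ, true_and]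
            rintro ⟨z, hz, hz1, hz2, hz3⟩
            exact hw3 z hz hz1 hz2 hz3
        · intro o ho
          simp only [alive, Finset.mem_filter, Finset.mem_univ, true_and] at ho ⊢
          obtain ⟨z, hz, hz1, hz2, hz3⟩ := ho
          exact ⟨z, hz, hz1, hz2.trans h, hz3⟩
      obtain ⟨r', hr', hR', hs⟩ := ih r hr (h.trans hpM) (by omega)
      refine ⟨r', hr', H.mono _ _ _ _ (H.trans _ _ _ _ _ hR hR') ?_, hs⟩
      push_cast
      linarith

theorem Sys.reach (H : Sys Q R) : ∀ p, Q p → R p (0, 0) (40 * nrm p) := by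
  refine H.ind nrm _ ?_
  intro p hp ih
  by_cases hp0 : p = (0, 0)
  · rw [hp0, nrm_zero]; simpa using H.refl _ H.zero
  have hn : 0 ≤ nrm p := by unfold nrm; positivity
  have hpos : 0 < nrm p := lt_of_le_of_ne hn (fun h => hp0 (nrm_eq_zero h.symm))
  obtain ⟨r, hr, hR, hs⟩ := H.halve (nrm p) hn 8 p hp le_rfl
    ((Finset.card_le_univ _).trans (by simp))
  have := ih r hr (by linarith)
  refine H.mono _ _ _ _ (H.trans _ _ _ _ _ hR this) ?_
  push_cast
  linarith

end core

/-- There is a path of length at most `l`. -/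
def Reach (P : Finset (ℝ × ℝ)) (p q : ℝ × ℝ) (l : ℝ) : Prop :=
  ∃ (k : ℕ) (v : ℕ → ℝ × ℝ), IsTheta4Path P k v ∧ v 0 = p ∧ v k = q ∧ pathLength k v ≤ l

theorem reach_trans (P : Finset (ℝ × ℝ)) (p q r : ℝ × ℝ) (a b : ℝ) (h1 : Reach P p q a)
    (h2 : Reach P q r b) : Reach P p r (a + b) := by
  obtain ⟨k, v, ⟨hv0, hv⟩, v0, vk, hl⟩ := h1
  obtain ⟨m, w, ⟨hw0, hw⟩, w0, wm, hl'⟩ := h2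
  set x : ℕ → ℝ × ℝ := fun j => if j ≤ k then v j else w (j - k) with hx
  have x1 : ∀ j, j ≤ k → x j = v j := by intro j hj; simp [hx, hj]
  have x2 : ∀ j, x (k + j) = w j := by
    intro j
    rcases Nat.eq_zero_or_pos j with rfl | hj
    · rw [Nat.add_zero, x1 k le_rfl, vk, w0]
    · have : ¬ (k + j ≤ k) := by omega
      simp only [hx, this, if_false]
      congr 1; omega
  refine ⟨k + m, x, ⟨?_, ?_⟩, ?_, ?_, ?_⟩
  · rw [x1 0 (Nat.zero_le _)]; exact hv0
  · intro j hj
    rcases lt_or_ge j k with h | h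
    · rw [x1 j h.le, x1 (j + 1) h]; exact hv j h
    · obtain ⟨i, rfl⟩ := Nat.exists_eq_add_of_le h
      rw [add_assoc, x2, x2]
      exact hw i (by omega)
  · rw [x1 0 (Nat.zero_le _)]; exact v0
  · rw [x2]; exact wm
  · have e : pathLength (k + m) x = pathLength k v + pathLength m w := by
      unfold pathLength
      rw [Finset.sum_range_add]
      congr 1
      · apply Finset.sum_congr rfl
        intro j hj
        have := Finset.mem_range.1 hj
        rw [x1 j this.le, x1 (j + 1) this]
      · apply Finset.sum_congr rfl
        intro j _
        rw [add_assoc, x2, x2]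
    rw [e]; linarith

theorem dist2_le_dist1 (p q : ℝ × ℝ) : dist2 p q ≤ dist1 p q := by
  unfold dist2 dist1
  apply Real.sqrt_le_iff.2
  refine ⟨by positivity, ?_⟩
  have := mul_nonneg (abs_nonneg (p.1 - q.1)) (abs_nonneg (p.2 - q.2))
  have h1 := sq_abs (p.1 - q.1)
  have h2 := sq_abs (p.2 - q.2)
  nlinarith

theorem reach_nbr (P : Finset (ℝ × ℝ)) (i : ℕ) (hi : i < 4) (p z : ℝ × ℝ) (hp : p ∈ P)
    (hz : z ∈ P) (hc : cone i p z) : ∃ q ∈ P, cone i p q ∧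
      (∀ r ∈ P, cone i p r → dist1 p q ≤ dist1 p r) ∧ Reach P p q (dist1 p q) := by
  classical
  obtain ⟨q, hq, hmin⟩ := (P.filter (fun r => cone i p r)).exists_min_image (dist1 p)
    ⟨z, by simp [hz, hc]⟩
  rw [Finset.mem_filter] at hq
  have hm : ∀ r ∈ P, cone i p r → dist1 p q ≤ dist1 p r :=
    fun r hr h => hmin r (Finset.mem_filter.2 ⟨hr, h⟩)
  refine ⟨q, hq.1, hq.2, hm, 1, fun j => if j = 0 then p else q, ⟨by simpa using hp, ?_⟩,
    by simp, by simp, ?_⟩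
  · intro j hj
    obtain rfl : j = 0 := by omega
    simp only [if_true, zero_add, one_ne_zero, if_false]
    exact ⟨hp, hq.1, i, hi, Or.inl ⟨hq.1, hq.2, hm⟩⟩
  · simpa [pathLength] using dist2_le_dist1 p q

/-- Inverse of the change of coordinates centred at `t`. -/
noncomputable def unrot (t z : ℝ × ℝ) : ℝ × ℝ := (t.1 + (z.1 - z.2) / 2, t.2 + (z.1 + z.2) / 2)

/-- The change of coordinates centred at `t`. -/
def torot (t p : ℝ × ℝ) : ℝ × ℝ := ((p.1 - t.1) + (p.2 - t.2), (p.2 - t.2) - (p.1 - t.1))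

theorem unrot_torot (t p : ℝ × ℝ) : unrot t (torot t p) = p := by
  unfold unrot torot
  ext <;> simp <;> ring

theorem torot_unrot (t p : ℝ × ℝ) : torot t (unrot t p) = p := by
  unfold unrot torot
  ext <;> simp <;> ring

theorem cone_dist (t p z : ℝ × ℝ) :
    (cone 1 (unrot t p) (unrot t z) ↔ |z.2 - p.2| < z.1 - p.1) ∧
    (cone 3 (unrot t p) (unrot t z) ↔ |z.2 - p.2| < -(z.1 - p.1)) ∧
    (cone 2 (unrot t p) (unrot t z) ↔ |z.1 - p.1| < z.2 - p.2) ∧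
    (cone 0 (unrot t p) (unrot t z) ↔ |z.1 - p.1| < -(z.2 - p.2)) := by
  simp only [cone, unrot, abs_lt]
  norm_num
  refine ⟨?_, ?_, ?_, ?_⟩ <;> constructor <;> rintro ⟨h1, h2⟩ <;> constructor <;> linarith

theorem dist1_unrot (t p z : ℝ × ℝ) : dist1 (unrot t p) (unrot t z) =
    max |z.1 - p.1| |z.2 - p.2| := by
  simp only [dist1, unrot]
  have e1 : t.1 + (p.1 - p.2) / 2 - (t.1 + (z.1 - z.2) / 2) =
    ((z.2 - p.2) - (z.1 - p.1)) / 2 := by ring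
  have e2 : t.2 + (p.1 + p.2) / 2 - (t.2 + (z.1 + z.2) / 2) =
    - ((z.2 - p.2) + (z.1 - p.1)) / 2 := by ring
  rw [e1, e2]
  generalize z.1 - p.1 = a
  generalize z.2 - p.2 = b
  rcases abs_cases ((b - a) / 2) with ⟨k, _⟩ | ⟨k, _⟩ <;>
    rcases abs_cases (-(b + a) / 2) with ⟨m, _⟩ | ⟨m, _⟩ <;>
    rcases abs_cases a with ⟨i, _⟩ | ⟨i, _⟩ <;> rcases abs_cases b with ⟨j, _⟩ | ⟨j, _⟩ <;>
    rcases max_cases |a| |b| with ⟨l, _⟩ | ⟨l, _⟩ <;> rw [k, m, l] <;> linarith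

theorem sys_theta (P : Finset (ℝ × ℝ)) (hP : GenPos P) (t : ℝ × ℝ) (ht : t ∈ P) :
    Sys (fun z => unrot t z ∈ P) (fun p q l => Reach P (unrot t p) (unrot t q) l) where
  fin := by
    have : Function.Injective (unrot t) := by
      intro a b h
      rw [← torot_unrot t a, h, torot_unrot]
    exact P.finite_toSet.preimage this.injOn
  zero := by simpa [unrot] using ht
  g1 := by
    intro z hz h0
    have hne : unrot t z ≠ t := by
      intro h
      apply h0
      rw [← torot_unrot t z, h]; simp [torot]
    have := hP _ hz t ht hne
    refine ⟨fun h => this.2.2.2 ?_, fun h => this.2.2.1 ?_⟩ <;>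
      simp only [unrot, h] <;> ring
  gp := by
    intro z w hz hw h0 h
    have hne : unrot t z ≠ unrot t w := by
      intro h
      apply h0
      rw [← torot_unrot t z, h, torot_unrot]
    have := hP _ hz _ hw hne
    rcases abs_eq_abs.1 h with h | h
    · apply this.1; simp only [unrot]; linarith
    · apply this.2.1; simp only [unrot]; linarith
  refl := fun p hp => ⟨0, fun _ => unrot t p, ⟨hp, by intro j hj; omega⟩, rfl, rfl, by
    simp [pathLength]⟩
  mono := by
    rintro p q a b ⟨k, v, h1, h2, h3, h4⟩ h
    exact ⟨k, v, h1, h2, h3, h4.trans h⟩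
  trans := fun p q r a b h h' => reach_trans P _ _ _ a b h h'
  horiz := by
    intro s hs p z hp hz h
    obtain ⟨i, hi, hc⟩ : ∃ i < 4, ∀ w, cone i (unrot t p) (unrot t w) ↔
        |w.2 - p.2| < s * (w.1 - p.1) := by
      rcases hs with rfl | rfl
      · exact ⟨1, by norm_num, fun w => by rw [one_mul]; exact (cone_dist t p w).1⟩
      · exact ⟨3, by norm_num, fun w => by rw [neg_one_mul]; exact (cone_dist t p w).2.1⟩
    have hd : ∀ w : ℝ × ℝ, |w.2 - p.2| < s * (w.1 - p.1) →
        dist1 (unrot t p) (unrot t w) = s * (w.1 - p.1) := by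
      intro w hw
      have h0 := abs_nonneg (w.2 - p.2)
      have e : |w.1 - p.1| = s * (w.1 - p.1) := by
        rcases hs with rfl | rfl
        · rw [one_mul, abs_of_nonneg]; linarith
        · rw [neg_one_mul, abs_of_nonpos]; linarith
      rw [dist1_unrot, e, max_eq_left hw.le]
    obtain ⟨q, hq, h1, h2, h3⟩ := reach_nbr P i hi _ _ hp hz ((hc z).2 h)
    obtain ⟨q, rfl⟩ : ∃ q', unrot t q' = q := ⟨_, unrot_torot t q⟩
    rw [hc] at h1
    rw [hd q h1] at h2 h3
    refine ⟨q, hq, h1, ?_, h3⟩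
    intro w hw hw'
    rw [← hd w hw']
    exact h2 _ hw ((hc w).2 hw')
  vert := by
    intro s hs p z hp hz h
    obtain ⟨i, hi, hc⟩ : ∃ i < 4, ∀ w, cone i (unrot t p) (unrot t w) ↔
        |w.1 - p.1| < s * (w.2 - p.2) := by
      rcases hs with rfl | rfl
      · exact ⟨2, by norm_num, fun w => by rw [one_mul]; exact (cone_dist t p w).2.2.1⟩
      · exact ⟨0, by norm_num, fun w => by rw [neg_one_mul]; exact (cone_dist t p w).2.2.2⟩
    have hd : ∀ w : ℝ × ℝ, |w.1 - p.1| < s * (w.2 - p.2) →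
        dist1 (unrot t p) (unrot t w) = s * (w.2 - p.2) := by
      intro w hw
      have h0 := abs_nonneg (w.1 - p.1)
      have e : |w.2 - p.2| = s * (w.2 - p.2) := by
        rcases hs with rfl | rfl
        · rw [one_mul, abs_of_nonneg]; linarith
        · rw [neg_one_mul, abs_of_nonpos]; linarith
      rw [dist1_unrot, e, max_eq_right hw.le]
    obtain ⟨q, hq, h1, h2, h3⟩ := reach_nbr P i hi _ _ hp hz ((hc z).2 h)
    obtain ⟨q, rfl⟩ : ∃ q', unrot t q' = q := ⟨_, unrot_torot t q⟩
    rw [hc] at h1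
    rw [hd q h1] at h2 h3
    refine ⟨q, hq, h1, ?_, h3⟩
    intro w hw hw'
    rw [← hd w hw']
    exact h2 _ hw ((hc w).2 hw')

theorem nrm_torot_le (a b : ℝ × ℝ) : nrm (torot b a) ≤ 2 * dist2 a b := by
  have h1 : |a.1 - b.1| ≤ dist2 a b := by
    unfold dist2; apply Real.abs_le_sqrt; nlinarith [sq_nonneg (a.2 - b.2)]
  have h2 : |a.2 - b.2| ≤ dist2 a b := by
    unfold dist2; apply Real.abs_le_sqrt; nlinarith [sq_nonneg (a.1 - b.1)]
  simp only [nrm, torot]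
  obtain ⟨h3, h4⟩ := abs_le.1 h1
  obtain ⟨h5, h6⟩ := abs_le.1 h2
  rcases abs_cases (a.1 - b.1 + (a.2 - b.2)) with ⟨k, _⟩ | ⟨k, _⟩ <;>
    rcases abs_cases (a.2 - b.2 - (a.1 - b.1)) with ⟨m, _⟩ | ⟨m, _⟩ <;> rw [k, m] <;> linarith

/-- If `(a,b,c)` is a triangle of the `L∞`-Delaunay triangulation of `P`, then there is an
`a`-`b`-path in the θ₄-graph of length at most `(1+√2)·(√2+36)·‖a−b‖₂`. -/
theorem delaunay_edge_path (P : Finset (ℝ × ℝ)) (hP : GenPos P) (a b c : ℝ × ℝ)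
    (ha : a ∈ P) (hb : b ∈ P) (hc : c ∈ P)
    (hsq : ∃ x0 y0 L : ℝ, 0 ≤ L ∧
      onBoundary x0 y0 L a ∧ onBoundary x0 y0 L b ∧ onBoundary x0 y0 L c ∧
      ∀ q ∈ P, ¬ (x0 < q.1 ∧ q.1 < x0 + L ∧ y0 < q.2 ∧ q.2 < y0 + L)) :
    ∃ (k : ℕ) (v : ℕ → ℝ × ℝ), IsTheta4Path P k v ∧ v 0 = a ∧ v k = b ∧
      pathLength k v ≤ (1 + Real.sqrt 2) * (Real.sqrt 2 + 36) * dist2 a b := by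
  have h := (sys_theta P hP b hb).reach (torot b a) (by
    show unrot b (torot b a) ∈ P
    rw [unrot_torot]; exact ha)
  rw [unrot_torot] at h
  have e : unrot b (0, 0) = b := by simp [unrot]
  rw [e] at h
  obtain ⟨k, v, h1, h2, h3, h4⟩ := h
  refine ⟨k, v, h1, h2, h3, h4.trans ?_⟩
  have hn := nrm_torot_le a b
  have hd : 0 ≤ dist2 a b := Real.sqrt_nonneg _
  have hs : (1.4 : ℝ) ≤ Real.sqrt 2 := Real.le_sqrt_of_sq_le (by norm_num)
  have hc : (80 : ℝ) ≤ (1 + Real.sqrt 2) * (Real.sqrt 2 + 36) := by nlinarith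
  nlinarith [mul_le_mul_of_nonneg_right hc hd]
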